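/- arXiv:1907.02664 — 5 statements merged into one kernel-verified Lean document; each statement's English description precedes it below -/
import Mathlib

section
/- Let m > k ≥ 1, q = m − k, and let b_1, …, b_q ∈ ℝ^m be orthonormal vectors. Let S = [S_1ᵀ ⋯ S_mᵀ]ᵀ ∈ ℝ^{pm×d} be the stacked encoding matrix built from b_1,…,b_q for dimension d (with p = ⌈d/q⌉). Then S has orthonormal columns: Sᵀ S = I_d. Consequently the Moore–Penrose pseudo-inverse of S equals Sᵀ. -/
/-!
Column `c` of the stacked matrix is supported in the block row `j = c / q`, where, read along the
worker index `i`, it is the vector `b (c % q)`; the row `c / q` exists because `p = ⌈d / q⌉`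
(`encS_eq_ite`). Columns in different block rows thus have disjoint supports, and two columns in
the same block row have the inner product of the corresponding `b`'s; since `(c / q, c % q)`
determines `c`, this gives `Sᵀ * S = 1`. The Penrose equations follow formally.
-/

open Matrix

/-- The `p × d` encoding matrix `S i` of worker `i`, built from vectors `b 1, …, b q ∈ ℝ^m`:
its `(j, c)` entry (`0`-indexed) equals `b (c - j*q) i` whenever `j*q ≤ c < (j+1)*q`
(and `c < d`), and `0` otherwise. -/
def encS (m q p d : ℕ) (b : Fin q → Fin m → ℝ) (i : Fin m) : Matrix (Fin p) (Fin d) ℝ :=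
  Matrix.of fun (j : Fin p) (c : Fin d) =>
    if h : j.1 * q ≤ c.1 ∧ c.1 < (j.1 + 1) * q then
      b ⟨c.1 - j.1 * q, by
        obtain ⟨h1, h2⟩ := h
        rw [add_mul, one_mul] at h2
        omega⟩ i
    else 0

/-- The encoding matrix in terms of quotient and remainder of the column index. -/
lemma encS_eq_ite {m q p d : ℕ} (hq : 0 < q) (b : Fin q → Fin m → ℝ) (i : Fin m)
    (j : Fin p) (c : Fin d) :
    encS m q p d b i j c = if j.1 = c.1 / q then b ⟨c.1 % q, Nat.mod_lt _ hq⟩ i else 0 := by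
  have key : (j.1 * q ≤ c.1 ∧ c.1 < (j.1 + 1) * q) ↔ j.1 = c.1 / q := by
    rw [← Nat.le_div_iff_mul_le hq, ← Nat.div_lt_iff_lt_mul hq]
    omega
  unfold encS
  rw [Matrix.of_apply]
  by_cases h : j.1 = c.1 / q
  · rw [dif_pos (key.2 h), if_pos h]
    congr 2
    rw [h, Nat.mod_def, Nat.mul_comm]
  · rw [dif_neg (mt key.1 h), if_neg h]

/-- Let `m > k ≥ 1`, `q = m - k`, and `b 1, …, b q ∈ ℝ^m` orthonormal.
The stacked `pm × d` encoding matrix `S = [S 1ᵀ ⋯ S mᵀ]ᵀ` built from the `b`'s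
(`p = ⌈d/q⌉`) has orthonormal columns, `Sᵀ * S = 1`; consequently `Sᵀ` is the Moore–Penrose
pseudo-inverse of `S`, i.e. it satisfies the four Penrose equations. -/
theorem stmt_11 (m k q d p : ℕ) (hk : 1 ≤ k) (hm : k < m) (hq : q = m - k)
    (hd : 1 ≤ d) (hp : p = (d + q - 1) / q)
    (b : Fin q → Fin m → ℝ)
    (hb : ∀ r s : Fin q, (∑ i, b r i * b s i) = if r = s then 1 else 0) :
    let S : Matrix (Fin m × Fin p) (Fin d) ℝ :=
      Matrix.of fun ij c => encS m q p d b ij.1 ij.2 c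
    Sᵀ * S = 1 ∧
    S * Sᵀ * S = S ∧ Sᵀ * (S * Sᵀ) = Sᵀ ∧ (S * Sᵀ)ᵀ = S * Sᵀ ∧ (Sᵀ * S)ᵀ = Sᵀ * S := by
  intro S
  have hq0 : 0 < q := by omega
  have hS : Sᵀ * S = 1 := by
    ext c c'
    have hcp : c.1 / q < p := by
      rw [hp, Nat.div_lt_iff_lt_mul hq0]
      have h1 := Nat.div_add_mod (d + q - 1) q
      have h2 := Nat.mod_lt (d + q - 1) hq0
      have h3 := c.2
      rw [Nat.mul_comm] at h1
      omega
    rw [Matrix.mul_apply, Fintype.sum_prod_type_right,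
      Finset.sum_eq_single (⟨c.1 / q, hcp⟩ : Fin p)]
    · simp only [S, Matrix.transpose_apply, Matrix.of_apply, encS_eq_ite hq0, if_true]
      by_cases hdiv : c.1 / q = c'.1 / q
      · simp only [hdiv, if_true, hb, Matrix.one_apply, Fin.ext_iff]
        refine if_congr ⟨fun hmod => ?_, fun h => by rw [h]⟩ rfl rfl
        rw [← Nat.div_add_mod c.1 q, ← Nat.div_add_mod c'.1 q, hdiv, hmod]
      · have hne : c ≠ c' := fun h => hdiv (by rw [h])
        simp [hdiv, Matrix.one_apply_ne hne]
    · intro j _ hj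
      have hj' : j.1 ≠ c.1 / q := fun h => hj (Fin.ext h)
      simp [S, encS_eq_ite hq0, hj']
    · simp
  refine ⟨hS, ?_, ?_, ?_, ?_⟩
  · rw [Matrix.mul_assoc, hS, Matrix.mul_one]
  · rw [← Matrix.mul_assoc, hS, Matrix.one_mul]
  · rw [Matrix.transpose_mul, Matrix.transpose_transpose]
  · rw [Matrix.transpose_mul, Matrix.transpose_transpose]
end

section
/- Let m > k ≥ 1, q = m − k, and let b_1, …, b_q ∈ ℝ^m be orthonormal. Let S_i ∈ ℝ^{p×d} be the encoding matrices built from b_1,…,b_q (p = ⌈d/q⌉), let f be the block-index map with f(j) = {(j−1)q+1,…,jq} for j < p and f(p) = {(p−1)q+1,…,d}, and for U ⊆ {1,…,p} let S_{[m]U,f(U)} = [S_{1U,f(U)}ᵀ ⋯ S_{mU,f(U)}ᵀ]ᵀ be the m|U| × |f(U)| stacked matrix. Then for every U ⊆ {1,…,p}, S_{[m]U,f(U)} has orthonormal columns, (S_{[m]U,f(U)})ᵀ S_{[m]U,f(U)} = I_{|f(U)|}; in particular it has full column rank. -/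
/-!
Each column `c` of the stacked matrix is supported on the single block row `j` with
`j*q ≤ c < (j+1)*q`, since these blocks are disjoint (`block_unique`), and that row lies in `U`.
So the inner product of columns `c` and `e` is `⟨b (c - j*q), b (e - j*q)⟩` when both lie in
block `j`, which is `1` or `0` by orthonormality of `b`, and `0` when they lie in different blocks.
-/

open Matrix
open scoped Classical

/-- The blocks `[j*q, (j+1)*q)` are pairwise disjoint. -/
theorem block_unique {j j' q c : ℕ} (h1 : j * q ≤ c) (h2 : c < (j + 1) * q)
    (h1' : j' * q ≤ c) (h2' : c < (j' + 1) * q) : j = j' := by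
  have a := lt_of_mul_lt_mul_right (h1.trans_lt h2') (Nat.zero_le q)
  have b := lt_of_mul_lt_mul_right (h1'.trans_lt h2) (Nat.zero_le q)
  omega

/-- Let `m > k ≥ 1`, `q = m - k`, `b 1, …, b q ∈ ℝ^m` orthonormal, and
`S i` the encoding matrices built from the `b`'s with block-index map `f`.  For every
`U ⊆ {1,…,p}`, the stacked `m|U| × |f(U)|` matrix `S_{[m]U, f(U)}` has orthonormal columns:
`(S_{[m]U,f(U)})ᵀ * S_{[m]U,f(U)} = 1`; in particular it has full column rank. -/
theorem stmt_13 (m k q d p : ℕ) (hk : 1 ≤ k) (hm : k < m) (hq : q = m - k)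
    (hd : 1 ≤ d) (hp : p = (d + q - 1) / q)
    (b : Fin q → Fin m → ℝ)
    (hb : ∀ r s : Fin q, (∑ i, b r i * b s i) = if r = s then 1 else 0) :
    ∀ U : Finset (Fin p),
      let M : Matrix (Fin m × {j // j ∈ U})
          {c : Fin d // ∃ j' ∈ U, j'.1 * q ≤ c.1 ∧ c.1 < (j'.1 + 1) * q} ℝ :=
        Matrix.of fun ij c => encS m q p d b ij.1 ij.2.1 c.1
      Mᵀ * M = 1 := by
  intro U M
  ext c e
  obtain ⟨c, j, hjU, hj1, hj2⟩ := c
  obtain ⟨e, he⟩ := e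
  -- Entry `(c, e)` of the Gram matrix; only the block row `j` containing `c` contributes.
  have hsum : (Mᵀ * M) ⟨c, j, hjU, hj1, hj2⟩ ⟨e, he⟩
      = ∑ i, encS m q p d b i j c * encS m q p d b i j e := by
    rw [Matrix.mul_apply, Fintype.sum_prod_type]
    refine Finset.sum_congr rfl fun i _ => ?_
    refine Fintype.sum_eq_single (⟨j, hjU⟩ : {j // j ∈ U}) fun j' hne => ?_
    have h0 : encS m q p d b i j'.1 c = 0 := by
      simp only [encS, Matrix.of_apply]
      refine dif_neg fun h => hne (Subtype.ext (Fin.ext ?_))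
      exact block_unique h.1 h.2 hj1 hj2
    change encS m q p d b i j'.1 c * encS m q p d b i j'.1 e = 0
    rw [h0, zero_mul]
  rw [hsum, Matrix.one_apply]
  simp only [encS, Matrix.of_apply, dif_pos (And.intro hj1 hj2)]
  by_cases h' : j.1 * q ≤ e.1 ∧ e.1 < (j.1 + 1) * q
  · simp only [dif_pos h', hb, Subtype.mk.injEq, Fin.ext_iff]
    have := h'.1
    exact if_congr (by omega) rfl rfl
  · have hne : c ≠ e := by
      rintro rfl
      exact h' ⟨hj1, hj2⟩
    simp [dif_neg h', hne]
end

section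
/- Let m > k ≥ 1, q = m − k, b_1, …, b_q ∈ ℝ^m, and let S = [S_1ᵀ ⋯ S_mᵀ]ᵀ ∈ ℝ^{pm×d} be the stacked encoding matrix built from b_1,…,b_q (p = ⌈d/q⌉), with block-index map f. Fix X ∈ ℝ^{n×d}, g ∈ ℝ^n, α ∈ ℝ, U ⊆ {1,…,p}, and suppose v ∈ ℝ^{pm} and w ∈ ℝ^d satisfy v = S w. Define v' ∈ ℝ^{pm} by v'_{iU} = v_{iU} − α S_{iU} Xᵀ g for each i ∈ {1,…,m} and v'_{iŪ} = v_{iŪ} on the remaining coordinates (Ū = {1,…,p}∖U), and define w' ∈ ℝ^d by w'_{f(U)} = w_{f(U)} − α X_{f(U)}ᵀ g and w'_c = w_c for c ∉ f(U). Then v' = S w': one coordinate-descent update of the encoded parameter vector on the coordinates U at every worker corresponds exactly to the coordinate-descent update of the original parameter vector on the coordinates f(U). -/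
/-!
Row `j` of each block of the encoding matrix is supported on the columns of the `j`-th index block,
and these blocks are pairwise disjoint (`encS_block_unique`). Hence on the support of row `j` the
update of `w` is active precisely when `j ∈ U`, and the claim follows from linearity of the row sum.
-/

open Matrix
open scoped Classical

/-- The column blocks `[j * q, (j + 1) * q)` are pairwise disjoint. -/
theorem encS_block_unique {q c j l : ℕ} (hj : j * q ≤ c ∧ c < (j + 1) * q)
    (hl : l * q ≤ c ∧ c < (l + 1) * q) : l = j := by
  have h1 : j < l + 1 := lt_of_mul_lt_mul_right (hj.1.trans_lt hl.2) (Nat.zero_le q)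
  have h2 : l < j + 1 := lt_of_mul_lt_mul_right (hl.1.trans_lt hj.2) (Nat.zero_le q)
  omega

/-- With the stacked encoding matrix `S` (blocks `S i`) and block-index
map `f` (`f(U)` is the set of columns `c` with `j*q ≤ c < (j+1)*q` for some `j ∈ U`): if
`v = S w` and one coordinate-descent step is performed, updating
`v' (i,j) = v (i,j) - α ⋅ (S i (Xᵀ g)) j` for `j ∈ U` (unchanged otherwise) and
`w' c = w c - α ⋅ (Xᵀ g) c` for `c ∈ f(U)` (unchanged otherwise), then `v' = S w'`. -/
theorem stmt_14 (m k q d p n : ℕ) (hk : 1 ≤ k) (hm : k < m) (hq : q = m - k)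
    (hd : 1 ≤ d) (hp : p = (d + q - 1) / q)
    (b : Fin q → Fin m → ℝ)
    (X : Matrix (Fin n) (Fin d) ℝ) (g : Fin n → ℝ) (α : ℝ) (U : Finset (Fin p))
    (v v' : Fin m × Fin p → ℝ) (w w' : Fin d → ℝ)
    (hvw : ∀ (i : Fin m) (j : Fin p), v (i, j) = (encS m q p d b i).mulVec w j)
    (hv' : ∀ (i : Fin m) (j : Fin p), v' (i, j) =
      if j ∈ U then v (i, j) - α * (encS m q p d b i).mulVec (Xᵀ.mulVec g) j
      else v (i, j))
    (hw' : ∀ c : Fin d, w' c =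
      if ∃ j ∈ U, j.1 * q ≤ c.1 ∧ c.1 < (j.1 + 1) * q then
        w c - α * Xᵀ.mulVec g c
      else w c) :
    ∀ (i : Fin m) (j : Fin p), v' (i, j) = (encS m q p d b i).mulVec w' j := by
  intro i j
  -- On the support of row `j`, membership of the column in `f(U)` reduces to `j ∈ U`.
  have key : ∀ c : Fin d, encS m q p d b i j c * w' c =
      encS m q p d b i j c * (if j ∈ U then w c - α * Xᵀ.mulVec g c else w c) := by
    intro c
    by_cases hc : j.1 * q ≤ c.1 ∧ c.1 < (j.1 + 1) * q
    · have hiff : (∃ l ∈ U, l.1 * q ≤ c.1 ∧ c.1 < (l.1 + 1) * q) ↔ j ∈ U := by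
        constructor
        · rintro ⟨l, hl, hlc⟩
          rwa [← Fin.ext (encS_block_unique hc hlc)]
        · exact fun h => ⟨j, h, hc⟩
      rw [hw' c]
      simp only [hiff]
    · have h0 : encS m q p d b i j c = 0 := by
        simp only [encS, Matrix.of_apply, dif_neg hc]
      rw [h0, zero_mul, zero_mul]
  have hmul : ∀ u : Fin d → ℝ, (encS m q p d b i).mulVec u j =
      ∑ c, encS m q p d b i j c * u c := fun u => by
    simp only [Matrix.mulVec, dotProduct]
  have hsum : (encS m q p d b i).mulVec w' j = ∑ c, encS m q p d b i j c *
      (if j ∈ U then w c - α * Xᵀ.mulVec g c else w c) := by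
    rw [hmul]
    exact Finset.sum_congr rfl fun c _ => key c
  rw [hsum, hv', hvw]
  split_ifs with hU
  · rw [hmul, hmul, Finset.mul_sum, ← Finset.sum_sub_distrib]
    exact Finset.sum_congr rfl fun c _ => by ring
  · exact hmul w
end

section
/- Let m > k ≥ 1, q = m − k, b_1, …, b_q ∈ ℝ^m, and let S ∈ ℝ^{pm×d} be the stacked encoding matrix built from b_1,…,b_q with block-index map f, and fix X ∈ ℝ^{n×d}. Let (U_s)_{s≥0} be subsets of {1,…,p}, (α_s)_{s≥0} real step sizes, and (g_s)_{s≥0} vectors in ℝ^n. Define sequences (w^s) in ℝ^d and (v^s) in ℝ^{pm} by: v^0 = S w^0; w^{s+1}_{f(U_s)} = w^s_{f(U_s)} − α_s X_{f(U_s)}ᵀ g_s with w^{s+1} unchanged outside f(U_s); and v^{s+1}_{iU_s} = v^s_{iU_s} − α_s S_{iU_s} Xᵀ g_s for each i with v^{s+1} unchanged on the remaining coordinates. Then v^s = S w^s for every s ≥ 0. -/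
/-!
Row `j` of each `S i` is supported on the block `f j`, and distinct blocks are disjoint. Hence a
column `c` with `S i j c ≠ 0` lies in `f (U s)` exactly when `j ∈ U s`, so the `j`-th coordinate of
`S i (w (s+1))` is that of `S i (w s - α s • Xᵀ (g s))` if `j ∈ U s` and that of `S i (w s)`
otherwise. By linearity this is the update rule of `v`, and the claim follows by induction on `s`.
-/

open Matrix
open scoped Classical

/-- The blocks `[j*q, (j+1)*q)` are pairwise disjoint. -/
theorem block_unique_s15 {p q c : ℕ} {j j' : Fin p} (h : j.1 * q ≤ c ∧ c < (j.1 + 1) * q)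
    (h' : j'.1 * q ≤ c ∧ c < (j'.1 + 1) * q) : j = j' := by
  have h1 : j.1 < j'.1 + 1 := lt_of_mul_lt_mul_right (h.1.trans_lt h'.2) (Nat.zero_le q)
  have h2 : j'.1 < j.1 + 1 := lt_of_mul_lt_mul_right (h'.1.trans_lt h.2) (Nat.zero_le q)
  exact Fin.ext (by omega)

/-- (Invariance of the encoding `v = S w` along coordinate descent.)
With the stacked encoding matrix `S` built from `b 1, …, b q` and the block-index map `f`,
given coordinate sets `U s`, step sizes `α s` and vectors `g s`, define the iterates by
`v 0 = S (w 0)`, `w (s+1) c = w s c - α s ⋅ (Xᵀ (g s)) c` for `c ∈ f (U s)` (unchanged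
otherwise) and `v (s+1) (i,j) = v s (i,j) - α s ⋅ (S i (Xᵀ (g s))) j` for `j ∈ U s`
(unchanged otherwise).  Then `v s = S (w s)` for every `s`. -/
theorem stmt_15 (m k q d p n : ℕ) (hk : 1 ≤ k) (hm : k < m) (hq : q = m - k)
    (hd : 1 ≤ d) (hp : p = (d + q - 1) / q)
    (b : Fin q → Fin m → ℝ)
    (X : Matrix (Fin n) (Fin d) ℝ)
    (U : ℕ → Finset (Fin p)) (α : ℕ → ℝ) (g : ℕ → Fin n → ℝ)
    (v : ℕ → Fin m × Fin p → ℝ) (w : ℕ → Fin d → ℝ)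
    (h0 : ∀ (i : Fin m) (j : Fin p), v 0 (i, j) = (encS m q p d b i).mulVec (w 0) j)
    (hw : ∀ (s : ℕ) (c : Fin d), w (s + 1) c =
      if ∃ j ∈ U s, j.1 * q ≤ c.1 ∧ c.1 < (j.1 + 1) * q then
        w s c - α s * Xᵀ.mulVec (g s) c
      else w s c)
    (hv : ∀ (s : ℕ) (i : Fin m) (j : Fin p), v (s + 1) (i, j) =
      if j ∈ U s then v s (i, j) - α s * (encS m q p d b i).mulVec (Xᵀ.mulVec (g s)) j
      else v s (i, j)) :
    ∀ (s : ℕ) (i : Fin m) (j : Fin p), v s (i, j) = (encS m q p d b i).mulVec (w s) j := by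
  intro s
  induction s with
  | zero => exact h0
  | succ s ih =>
    intro i j
    rw [hv, ih]
    -- On the support of row `j`, the update of `w` is active exactly when `j ∈ U s`.
    have key : ∀ c : Fin d, encS m q p d b i j c * w (s + 1) c =
        encS m q p d b i j c *
          (if j ∈ U s then w s c - α s * Xᵀ.mulVec (g s) c else w s c) := by
      intro c
      by_cases hc : j.1 * q ≤ c.1 ∧ c.1 < (j.1 + 1) * q
      · have hiff : (∃ j' ∈ U s, j'.1 * q ≤ c.1 ∧ c.1 < (j'.1 + 1) * q) ↔ j ∈ U s := by
          constructor
          · rintro ⟨j', hj', hc'⟩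
            rwa [block_unique_s15 hc hc']
          · exact fun hj => ⟨j, hj, hc⟩
        rw [hw]
        simp only [hiff]
      · simp [encS, hc]
    simp only [Matrix.mulVec, dotProduct] at key ⊢
    rw [Finset.sum_congr rfl fun c _ => key c]
    split_ifs
    · rw [Finset.mul_sum, ← Finset.sum_sub_distrib]
      exact Finset.sum_congr rfl fun c _ => by ring
    · rfl
end

section
/- Let t ≥ 1, k = 2t, m > k, q = m − k. Let F be a k×m real matrix such that every set of k columns of F is linearly independent, let b_1, …, b_q ∈ ℝ^m be a basis of the null space of F, and let S_i ∈ ℝ^{p×d} be the encoding matrices built from b_1,…,b_q (p = ⌈d/q⌉) with block-index map f. Fix U ⊆ {1,…,p}. Suppose w, w' ∈ ℝ^{f(U)} and per-worker error vectors e_i, e'_i ∈ ℝ^{|U|} (i ∈ {1,…,m}) satisfy: at most t of the e_i are nonzero, at most t of the e'_i are nonzero, and S_{iU,f(U)} w + e_i = S_{iU,f(U)} w' + e'_i for every i. Then w = w'. Hence the updated block w_{f(U)} of the parameter vector can be exactly recovered from the replies {S_{iU,f(U)} w_{f(U)} + e_i}_{i=1}^m with at most t corrupted workers. -/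
/-!
Fix a block `j ∈ U` and put `x = w - w'`. The vector of the `j`-th replies of all workers to `x`
is a linear combination of `b 1, …, b q`, hence lies in the null space of `F`; it also equals the
difference of the `j`-th error coordinates, so it is supported on at most `2t = k` workers. As any
`k` columns of `F` are independent, this vector vanishes (`eq_zero_of_sparse_of_mulVec_eq_zero`).
Linear independence of the `b a` then makes its coefficients, which are the entries of `x` in
block `j`, vanish.
-/

open Matrix
open scoped Classical

/-- A null vector of a matrix whose columns are `k`-wise independent is zero once its support
has at most `k` elements: the support extends to a set of exactly `k` columns. -/
lemma eq_zero_of_sparse_of_mulVec_eq_zero {k m : ℕ} (hm : k ≤ m)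
    (F : Matrix (Fin k) (Fin m) ℝ)
    (hF : ∀ S : Finset (Fin m), S.card = k →
      LinearIndependent ℝ (fun j : {x // x ∈ S} => fun i : Fin k => F i j.1))
    (v : Fin m → ℝ) (hv : F.mulVec v = 0)
    (T : Finset (Fin m)) (hT : T.card ≤ k) (hvT : ∀ i ∉ T, v i = 0) : v = 0 := by
  obtain ⟨S, hTS, hS⟩ := Finset.exists_superset_card_eq (s := T) (n := k) hT (by simpa using hm)
  have h := Fintype.linearIndependent_iff.1 (hF S hS) (fun j => v j.1) (by
    ext i
    have hi := congrFun hv i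
    simp only [Matrix.mulVec, dotProduct, Pi.zero_apply] at hi
    simp only [Finset.sum_apply, Pi.smul_apply, smul_eq_mul, Pi.zero_apply]
    rw [← hi, Finset.sum_coe_sort S (fun j => v j * F i j)]
    rw [Finset.sum_subset (Finset.subset_univ S)
      (fun x _ hx => by rw [hvT x (fun h => hx (hTS h)), zero_mul])]
    exact Finset.sum_congr rfl fun _ _ => mul_comm _ _)
  ext i
  by_cases hi : i ∈ S
  · exact h ⟨i, hi⟩
  · exact hvT i fun h => hi (hTS h)

/-- Within row `j`, column `c = j * q + a` of the encoding matrix carries `b a`. -/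
lemma encS_eq_sum (m q p d : ℕ) (b : Fin q → Fin m → ℝ) (i : Fin m) (j : Fin p) (c : Fin d) :
    encS m q p d b i j c = ∑ a : Fin q, if c.1 = j.1 * q + a.1 then b a i else 0 := by
  unfold encS
  simp only [Matrix.of_apply]
  split_ifs with h
  · rw [Finset.sum_eq_single (⟨c.1 - j.1 * q, by
      obtain ⟨h1, h2⟩ := h
      rw [add_mul, one_mul] at h2
      omega⟩ : Fin q)]
    · rw [if_pos (by simp only; omega)]
    · intro a _ ha
      rw [if_neg]
      intro hc
      apply ha
      ext
      simp only
      omega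
    · simp
  · symm
    apply Finset.sum_eq_zero
    intro a _
    rw [if_neg]
    intro hc
    apply h
    rw [add_mul, one_mul]
    have := a.2
    omega

/-- Let `t ≥ 1`, `k = 2t`, `m > k`, `q = m - k`.  With `F` a `k × m` real
matrix every `k` of whose columns are linearly independent, `b 1, …, b q` a basis of the
null space of `F`, the encoding matrices `S i` built from the `b`'s and the block-index map
`f`: fix `U ⊆ {1,…,p}`.  If `w, w' ∈ ℝ^{f(U)}` and per-worker errors `e i, e' i ∈ ℝ^{|U|}`
satisfy that at most `t` of the `e i` are nonzero, at most `t` of the `e' i` are nonzero, and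
`S_{iU,f(U)} w + e i = S_{iU,f(U)} w' + e' i` for every `i`, then `w = w'`.  Hence the updated
block `w_{f(U)}` can be exactly recovered from the replies with at most `t` corrupted
workers. -/
theorem stmt_16 (t k m q d p : ℕ) (ht : 1 ≤ t) (hk : k = 2 * t) (hm : k < m)
    (hq : q = m - k) (hd : 1 ≤ d) (hp : p = (d + q - 1) / q)
    (F : Matrix (Fin k) (Fin m) ℝ)
    (hF : ∀ S : Finset (Fin m), S.card = k →
      LinearIndependent ℝ (fun j : {x // x ∈ S} => fun i : Fin k => F i j.1))
    (b : Fin q → Fin m → ℝ)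
    (hker : ∀ c : Fin q, F.mulVec (b c) = 0)
    (hli : LinearIndependent ℝ b)
    (hspan : ∀ v : Fin m → ℝ, F.mulVec v = 0 → v ∈ Submodule.span ℝ (Set.range b))
    (U : Finset (Fin p))
    (w w' : {c : Fin d // ∃ j ∈ U, j.1 * q ≤ c.1 ∧ c.1 < (j.1 + 1) * q} → ℝ)
    (e e' : Fin m → {j // j ∈ U} → ℝ)
    (he : {i : Fin m | e i ≠ 0}.ncard ≤ t) (he' : {i : Fin m | e' i ≠ 0}.ncard ≤ t)
    (heq : ∀ (i : Fin m) (j : {j // j ∈ U}),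
      (∑ c, encS m q p d b i j.1 c.1 * w c) + e i j =
      (∑ c, encS m q p d b i j.1 c.1 * w' c) + e' i j) :
    w = w' := by
  obtain ⟨T, hTcard, hT⟩ : ∃ T : Finset (Fin m), T.card ≤ k ∧ ∀ i ∉ T, e i = 0 ∧ e' i = 0 := by
    refine ⟨Finset.univ.filter (fun i => e i ≠ 0) ∪ Finset.univ.filter (fun i => e' i ≠ 0), ?_, ?_⟩
    · rw [Set.ncard_eq_toFinset_card', Set.toFinset_ofPred] at he he'
      refine (Finset.card_union_le _ _).trans ?_
      omega
    · intro i hi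
      simpa [not_or] using hi
  funext c₀
  obtain ⟨j, hjU, hj1, hj2⟩ := c₀.2
  rw [add_mul, one_mul] at hj2
  -- `g a` is the entry of `w - w'` at column `j * q + a`, or `0` if there is no such column.
  set g : Fin q → ℝ := fun a => ∑ c, if c.1.1 = j.1 * q + a.1 then w c - w' c else 0 with hg
  have hsum : ∀ i, (∑ a, g a • b a) i = e' i ⟨j, hjU⟩ - e i ⟨j, hjU⟩ := by
    intro i
    have h := heq i ⟨j, hjU⟩
    have h2 : (∑ a, g a • b a) i = ∑ c, encS m q p d b i j c.1 * (w c - w' c) := by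
      simp only [Finset.sum_apply, Pi.smul_apply, smul_eq_mul, hg, Finset.sum_mul, encS_eq_sum]
      rw [Finset.sum_comm]
      refine Finset.sum_congr rfl fun c _ => Finset.sum_congr rfl fun a _ => ?_
      split_ifs <;> ring
    rw [h2]
    simp only [mul_sub, Finset.sum_sub_distrib]
    simp only at h
    linarith
  have hzero : ∑ a, g a • b a = 0 := by
    refine eq_zero_of_sparse_of_mulVec_eq_zero hm.le F hF _ ?_ T hTcard ?_
    · rw [← Matrix.mulVecLin_apply, map_sum]
      refine Finset.sum_eq_zero fun a _ => ?_
      rw [map_smul, Matrix.mulVecLin_apply, hker, smul_zero]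
    · intro i hi
      rw [hsum, (hT i hi).1, (hT i hi).2]
      simp
  have hga := Fintype.linearIndependent_iff.1 hli g hzero ⟨c₀.1.1 - j.1 * q, by omega⟩
  simp only [hg] at hga
  rw [Finset.sum_eq_single c₀] at hga
  · rw [if_pos (by omega)] at hga
    linarith
  · intro c _ hc
    rw [if_neg]
    intro h
    apply hc
    ext
    omega
  · simp
end
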